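/- arXiv:1902.09599 — 2 statements merged into one kernel-verified Lean document; each statement's English description precedes it below -/
import Mathlib

section
/- (Theorem 2) Let q be a mask distribution on M with support S_q = {m ∈ M : q(m) > 0}, and fix τ ∈ P. For x₁, x₂ : I → ℝ, the masked images coincide, T_{q,τ} x₁ = T_{q,τ} x₂, if and only if x₁ and x₂ have the same marginals on every supported mask: x₁([v]_m) = x₂([v]_m) for all v ∈ I and all m ∈ S_q. -/
/-!
Summing `T q τ x` over the class `[v]_k` expresses it through marginals of `x`:
`(T q τ x)([v]_k) = ∑ q m * x([v]_{m ⊓ k})`, over the masks `m` such that `v` takes the fill-in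
value `τ` on `k \ m`. For `k = ⊤` this writes `T q τ x` itself in terms of the marginals of `x` on
supported masks. Conversely, the system is triangular in `k`: the masks `m ≥ k` contribute
`(∑_{m ≥ k} q m) * x([v]_k)`, all others only marginals on masks strictly below `k`. When the
diagonal coefficients do not vanish at the masks `j ≤ k`, well-founded induction recovers the
marginal of `x` on `k` from `T q τ x`. For `q ≥ 0` they are positive below every supported mask.
-/

open Finset
open scoped Classical

/-- The transition operator `T_{q,τ}`: for a mask distribution `q` on masks
`Fin n → Bool`, a fill-in value `τ`, and `x : (Fin n → P) → ℝ`,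
`(T q τ x) v = ∑_{m} ∑_{u} q m * x u * [f_τ(u, m) = v]`, where the masking
operator is `f_τ(u,m) d = if m d then u d else τ`. -/
noncomputable def T {n : ℕ} {P : Type*} [Fintype P] [DecidableEq P]
    (q : (Fin n → Bool) → ℝ) (τ : P) (x : (Fin n → P) → ℝ) : (Fin n → P) → ℝ :=
  fun v => ∑ m : Fin n → Bool, ∑ u : Fin n → P,
    q m * x u * (if (fun d => if m d then u d else τ) = v then (1 : ℝ) else 0)

/-- The marginal `x([v]_m) = ∑_{u ∈ [v]_m} x u`, where `u ∈ [v]_m` iff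
`u` agrees with `v` on every coordinate observed by the mask `m`. -/
noncomputable def marg {n : ℕ} {P : Type*} [Fintype P] [DecidableEq P]
    (x : (Fin n → P) → ℝ) (m : Fin n → Bool) (v : Fin n → P) : ℝ :=
  ∑ u : Fin n → P, if (∀ d, m d = true → v d = u d) then x u else 0

section Masking

variable {ι P : Type*}

/-- The masking operator `f_τ(u, m)`: the coordinates of `u` not observed by the mask `m` are
overwritten by the fill-in value `τ`. It spells out the expression occurring in `T`. -/
def applyMask (τ : P) (u : ι → P) (m : ι → Bool) : ι → P :=
  fun d => if m d then u d else τ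

/-- The relation `v ~_m u`: the vectors `v` and `u` agree on the coordinates observed by the mask
`m`. It spells out the condition occurring in `marg`. -/
def AgreeOn (m : ι → Bool) (v u : ι → P) : Prop :=
  ∀ d, m d = true → v d = u d

lemma agreeOn_top {v u : ι → P} : AgreeOn ⊤ v u ↔ v = u := by
  simp [AgreeOn, funext_iff]

lemma agreeOn_bot (v u : ι → P) : AgreeOn ⊥ v u := by
  simp [AgreeOn]

lemma agreeOn_applyMask {τ : P} {k m : ι → Bool} {v u : ι → P} :
    AgreeOn k v (applyMask τ u m) ↔ AgreeOn (k \ m) v (fun _ => τ) ∧ AgreeOn (m ⊓ k) v u := by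
  simp only [AgreeOn, ← forall_and]
  refine forall_congr' fun d => ?_
  cases hk : k d <;> cases hm : m d <;> simp [applyMask, sdiff_eq, hk, hm]

end Masking

lemma sum_filter_le_pos {α R : Type*} [Fintype α] [LE α] [AddCommMonoid R]
    [PartialOrder R] [IsOrderedCancelAddMonoid R] {q : α → R} (hq : ∀ a, 0 ≤ q a) {a b : α}
    (hb : 0 < q b) (hab : a ≤ b) : 0 < ∑ c with a ≤ c, q c :=
  sum_pos' (fun c _ => hq c) ⟨b, mem_filter.2 ⟨mem_univ b, hab⟩, hb⟩

section Transition

variable {n : ℕ} {P : Type*} [Fintype P] [DecidableEq P]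

lemma marg_eq_sum_filter (x : (Fin n → P) → ℝ) (m : Fin n → Bool) (v : Fin n → P) :
    marg x m v = ∑ u with AgreeOn m v u, x u := by
  rw [sum_filter]
  exact sum_congr rfl fun u _ => if_congr Iff.rfl rfl rfl

lemma marg_top (x : (Fin n → P) → ℝ) (v : Fin n → P) : marg x ⊤ v = x v := by
  simp [marg_eq_sum_filter, agreeOn_top, filter_eq]

variable (q : (Fin n → Bool) → ℝ) (τ : P) (x : (Fin n → P) → ℝ)

lemma sum_filter_T (p : (Fin n → P) → Prop) :
    ∑ w with p w, T q τ x w = ∑ m, q m * ∑ u with p (applyMask τ u m), x u :=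
  calc ∑ w with p w, T q τ x w
      = ∑ m, ∑ w with p w, ∑ u, if applyMask τ u m = w then q m * x u else 0 := by
        simp only [T, mul_ite, mul_one, mul_zero]
        exact sum_comm
    _ = ∑ m, ∑ u, if p (applyMask τ u m) then q m * x u else 0 := by
        refine sum_congr rfl fun m _ => ?_
        rw [sum_comm]
        simp only [sum_ite_eq, mem_filter_univ]
    _ = ∑ m, q m * ∑ u with p (applyMask τ u m), x u := by
        simp only [mul_sum, ← sum_filter]

lemma marg_T (k : Fin n → Bool) (v : Fin n → P) :
    marg (T q τ x) k v =
      ∑ m with AgreeOn (k \ m) v (fun _ => τ), q m * marg x (m ⊓ k) v := by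
  rw [marg_eq_sum_filter, sum_filter_T, sum_filter]
  refine sum_congr rfl fun m _ => ?_
  split_ifs with h
  · simp only [agreeOn_applyMask, h, true_and, marg_eq_sum_filter]
  · simp only [agreeOn_applyMask, h, false_and, filter_false, sum_empty, mul_zero]

lemma T_apply_eq_sum_marg (v : Fin n → P) :
    T q τ x v = ∑ m with AgreeOn mᶜ v (fun _ => τ), q m * marg x m v := by
  simpa only [marg_top, top_sdiff, inf_top_eq] using marg_T q τ x ⊤ v

lemma marg_T_eq_add_sum_not_le (k : Fin n → Bool) (v : Fin n → P) :
    marg (T q τ x) k v = (∑ m with k ≤ m, q m) * marg x k v +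
      ∑ m with ¬ k ≤ m ∧ AgreeOn (k \ m) v (fun _ => τ), q m * marg x (m ⊓ k) v := by
  have agree_of_le (m : Fin n → Bool) (hkm : k ≤ m) : AgreeOn (k \ m) v (fun _ => τ) := by
    rw [sdiff_eq_bot_iff.2 hkm]
    exact agreeOn_bot _ _
  have diagonal : ∑ m with k ≤ m ∧ AgreeOn (k \ m) v (fun _ => τ), q m * marg x (m ⊓ k) v =
      (∑ m with k ≤ m, q m) * marg x k v := by
    rw [sum_mul]
    refine sum_congr (filter_congr fun m _ => and_iff_left_of_imp (agree_of_le m)) fun m hm => ?_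
    rw [inf_eq_right.2 (mem_filter.1 hm).2]
  rw [marg_T, ← diagonal, ← sum_filter_add_sum_filter_not _ (fun m => k ≤ m)]
  simp only [filter_filter, and_comm]

variable {q τ} {x₁ x₂ : (Fin n → P) → ℝ}

lemma marg_eq_of_T_eq (hT : T q τ x₁ = T q τ x₂) {k : Fin n → Bool}
    (hq : ∀ j ≤ k, ∑ m with j ≤ m, q m ≠ 0) (v : Fin n → P) : marg x₁ k v = marg x₂ k v := by
  induction k using WellFoundedLT.induction with
  | ind k ih =>
    have lower_eq (m : Fin n → Bool) (hkm : ¬ k ≤ m) : marg x₁ (m ⊓ k) v = marg x₂ (m ⊓ k) v :=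
      ih (m ⊓ k) (inf_lt_right.2 hkm) fun j hj => hq j (hj.trans inf_le_right)
    have marg_T_eq : marg (T q τ x₁) k v = marg (T q τ x₂) k v := by rw [hT]
    have lower_sum_eq :
        ∑ m with ¬ k ≤ m ∧ AgreeOn (k \ m) v (fun _ => τ), q m * marg x₁ (m ⊓ k) v =
          ∑ m with ¬ k ≤ m ∧ AgreeOn (k \ m) v (fun _ => τ), q m * marg x₂ (m ⊓ k) v :=
      sum_congr rfl fun m hm => by rw [lower_eq m (mem_filter.1 hm).2.1]
    rw [marg_T_eq_add_sum_not_le, marg_T_eq_add_sum_not_le, lower_sum_eq] at marg_T_eq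
    exact mul_left_cancel₀ (hq k le_rfl) (add_right_cancel marg_T_eq)

lemma T_eq_of_marg_eq (h : ∀ v m, q m ≠ 0 → marg x₁ m v = marg x₂ m v) :
    T q τ x₁ = T q τ x₂ := by
  funext v
  rw [T_apply_eq_sum_marg, T_apply_eq_sum_marg]
  refine sum_congr rfl fun m _ => ?_
  obtain hm | hm := eq_or_ne (q m) 0
  · rw [hm, zero_mul, zero_mul]
  · rw [h v m hm]

end Transition

theorem stmt5_general {n : ℕ} {P : Type*} [Fintype P] [DecidableEq P]
    (q : (Fin n → Bool) → ℝ) (hq : ∀ m, q m ≠ 0 → ∀ k ≤ m, ∑ m' with k ≤ m', q m' ≠ 0)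
    (τ : P) (x₁ x₂ : (Fin n → P) → ℝ) :
    T q τ x₁ = T q τ x₂ ↔
      ∀ (v : Fin n → P) (m : Fin n → Bool), q m ≠ 0 → marg x₁ m v = marg x₂ m v :=
  ⟨fun hT v m hm => marg_eq_of_T_eq hT (hq m hm) v, T_eq_of_marg_eq⟩

/-- Theorem 2: the masked images coincide iff the marginals agree on every
supported mask. -/
theorem stmt5 {n : ℕ} (hn : 1 ≤ n) {P : Type*} [Fintype P] [Nonempty P] [DecidableEq P]
    (q : (Fin n → Bool) → ℝ) (hq0 : ∀ m, 0 ≤ q m)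
    (hq1 : (∑ m : Fin n → Bool, q m) = 1)
    (τ : P) (x₁ x₂ : (Fin n → P) → ℝ) :
    T q τ x₁ = T q τ x₂ ↔
      ∀ (v : Fin n → P) (m : Fin n → Bool), 0 < q m → marg x₁ m v = marg x₂ m v := by
  simp only [(hq0 _).lt_iff_ne']
  exact stmt5_general q
    (fun m hm _ hk => (sum_filter_le_pos hq0 ((hq0 m).lt_of_ne' hm) hk).ne') τ x₁ x₂
end

section
/- Let q be a mask distribution on M with support S_q, fix τ ∈ P, and for v ∈ I let M_{τ,v} = {m ∈ S_q : v_d = τ for every d with m_d = 0}. If v₀ ∈ I is such that M_{τ,v₀} = {m₀} is a singleton, then for every x : I → ℝ, x([v₀]_{m₀}) = (T_{q,τ} x)(v₀) / q(m₀). -/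
open Finset
open scoped Classical

/-! A pair `(m, u)` contributes to `(T q τ x) v` exactly when `v` equals `τ` wherever `m` vanishes
and `u ∈ [v]_m`. The first condition involves only `m`, and the second sums `x` to the marginal, so
`(T q τ x) v = ∑ m ∈ M_{τ,v}, q m * x([v]_m)`. When `M_{τ,v}` is a singleton, this is a single term
that can be solved for the marginal. -/

/-- The masking operator `f_τ(u, m)`: it keeps the coordinates of `u` observed by `m` and fills the
others with `τ`. -/
def maskFill {ι P : Type*} (τ : P) (u : ι → P) (m : ι → Bool) : ι → P :=
  fun d => if m d then u d else τ

theorem maskFill_eq_iff {ι P : Type*} {τ : P} {u v : ι → P} {m : ι → Bool} :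
    maskFill τ u m = v ↔ (∀ d, m d = false → v d = τ) ∧ ∀ d, m d = true → v d = u d := by
  rw [funext_iff, ← forall_and]
  refine forall_congr' fun d => ?_
  cases hd : m d <;> simp [maskFill, hd, eq_comm]

/-- The set `M_{τ,v}` of masks in the support of `q` that can produce `v` with fill-in value `τ`.
The weights `q` may be signed, so the support is `{m | q m ≠ 0}`. -/
noncomputable def compatibleMasks {n : ℕ} {P : Type*} (q : (Fin n → Bool) → ℝ) (τ : P)
    (v : Fin n → P) : Finset (Fin n → Bool) :=
  {m | q m ≠ 0 ∧ ∀ d, m d = false → v d = τ}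

theorem mem_compatibleMasks {n : ℕ} {P : Type*} {q : (Fin n → Bool) → ℝ} {τ : P} {v : Fin n → P}
    {m : Fin n → Bool} :
    m ∈ compatibleMasks q τ v ↔ q m ≠ 0 ∧ ∀ d, m d = false → v d = τ :=
  mem_filter_univ m

theorem compatibleMasks_eq_filter_pos {n : ℕ} {P : Type*} [DecidableEq P]
    {q : (Fin n → Bool) → ℝ} (hq : ∀ m, 0 ≤ q m) (τ : P) (v : Fin n → P) :
    compatibleMasks q τ v =
      univ.filter fun m : Fin n → Bool => 0 < q m ∧ ∀ d, m d = false → v d = τ := by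
  ext m
  rw [mem_compatibleMasks, mem_filter_univ, (hq m).lt_iff_ne']

section Transition

variable {n : ℕ} {P : Type*} [Fintype P] [DecidableEq P]

theorem T_apply (q : (Fin n → Bool) → ℝ) (τ : P) (x : (Fin n → P) → ℝ) (v : Fin n → P) :
    T q τ x v = ∑ m, q m * ∑ u with maskFill τ u m = v, x u := by
  simp only [T, mul_ite, mul_one, mul_zero, sum_filter, mul_sum]
  rfl

theorem sum_maskFill_fiber_eq_marg (x : (Fin n → P) → ℝ) {τ : P} {m : Fin n → Bool}
    {v : Fin n → P} (hv : ∀ d, m d = false → v d = τ) :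
    ∑ u with maskFill τ u m = v, x u = marg x m v := by
  simp only [marg, maskFill_eq_iff, and_iff_right hv, sum_filter]

theorem sum_maskFill_fiber_eq_zero (x : (Fin n → P) → ℝ) {τ : P} {m : Fin n → Bool}
    {v : Fin n → P} (hv : ¬∀ d, m d = false → v d = τ) :
    ∑ u with maskFill τ u m = v, x u = 0 :=
  sum_eq_zero fun _ hu => absurd (maskFill_eq_iff.mp (mem_filter.mp hu).2).1 hv

theorem T_apply_eq_sum_compatibleMasks (q : (Fin n → Bool) → ℝ) (τ : P) (x : (Fin n → P) → ℝ)
    (v : Fin n → P) :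
    T q τ x v = ∑ m ∈ compatibleMasks q τ v, q m * marg x m v := by
  have vanish (m : Fin n → Bool) (hm : m ∉ compatibleMasks q τ v) :
      q m * ∑ u with maskFill τ u m = v, x u = 0 := by
    rw [mem_compatibleMasks, not_and] at hm
    rcases eq_or_ne (q m) 0 with hq | hq
    · rw [hq, zero_mul]
    · rw [sum_maskFill_fiber_eq_zero x (hm hq), mul_zero]
  calc
    T q τ x v = ∑ m, q m * ∑ u with maskFill τ u m = v, x u := T_apply q τ x v
    _ = ∑ m ∈ compatibleMasks q τ v, q m * ∑ u with maskFill τ u m = v, x u :=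
      (sum_subset (subset_univ _) fun m _ hm => vanish m hm).symm
    _ = ∑ m ∈ compatibleMasks q τ v, q m * marg x m v :=
      sum_congr rfl fun m hm => by rw [sum_maskFill_fiber_eq_marg x (mem_compatibleMasks.mp hm).2]

theorem stmt11_general {q : (Fin n → Bool) → ℝ} {τ : P} {v₀ : Fin n → P} {m₀ : Fin n → Bool}
    (hsingle : compatibleMasks q τ v₀ = {m₀}) (x : (Fin n → P) → ℝ) :
    marg x m₀ v₀ = T q τ x v₀ / q m₀ := by
  have hm₀ : m₀ ∈ compatibleMasks q τ v₀ := hsingle ▸ mem_singleton_self m₀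
  have hq : q m₀ ≠ 0 := (mem_compatibleMasks.mp hm₀).1
  rw [T_apply_eq_sum_compatibleMasks, hsingle, sum_singleton, mul_div_cancel_left₀ _ hq]

end Transition

/-- Base case of Proposition 2: if `M_{τ,v₀}` is the singleton `{m₀}`, then
`x([v₀]_{m₀}) = (T_{q,τ} x)(v₀) / q(m₀)`. -/
theorem stmt11 {n : ℕ} (hn : 1 ≤ n) {P : Type*} [Fintype P] [Nonempty P] [DecidableEq P]
    (q : (Fin n → Bool) → ℝ) (hq0 : ∀ m, 0 ≤ q m)
    (hq1 : (∑ m : Fin n → Bool, q m) = 1)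
    (τ : P) (v₀ : Fin n → P) (m₀ : Fin n → Bool)
    (hsingle : Finset.univ.filter
        (fun m : Fin n → Bool => 0 < q m ∧ ∀ d, m d = false → v₀ d = τ) = {m₀})
    (x : (Fin n → P) → ℝ) :
    marg x m₀ v₀ = T q τ x v₀ / q m₀ :=
  stmt11_general ((compatibleMasks_eq_filter_pos hq0 τ v₀).trans hsingle) x
end
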